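/- arXiv:1703.00546 — 2 statements merged into one kernel-verified Lean document; each statement's English description precedes it below -/
import Mathlib

section
/- Let H be a complex Hilbert space, 1 ≤ d ≤ n, and let x_1,…,x_n be positive bounded operators on H. Then ‖P_d(x_1,…,x_n)‖^{1/d} ≤ d·‖P_1(x_1,…,x_n)‖, where ‖·‖ is the operator norm. -/
open scoped BigOperators

/-- The average product
`P_d(x_1,…,x_n) = ((n-d)!/n!) ∑_{i injective} x_{i 1} x_{i 2} ⋯ x_{i d}`,
the sum running over all `d`-tuples of pairwise distinct indices in `{1,…,n}`. -/
noncomputable def avgProd {A : Type*} [Ring A] [Module ℝ A] (n d : ℕ)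
    (x : Fin n → A) : A :=
  ((Nat.factorial (n - d) : ℝ) / (Nat.factorial n : ℝ)) •
    ∑ i ∈ Finset.univ.filter (fun i : Fin d → Fin n => Function.Injective i),
      ((List.finRange d).map (fun k => x (i k))).prod

open Finset

section partialSum

variable {ι κ M : Type*} [Fintype ι] [DecidableEq ι] [Fintype κ] [DecidableEq κ] [AddCommMonoid M]

/-- The sum of `F` over all functions that agree with `e` outside `B`. -/
def partialSum (B : Finset ι) (F : (ι → κ) → M) (e : ι → κ) : M :=
  ∑ i with ∀ b ∉ B, i b = e b, F i

lemma partialSum_empty (F : (ι → κ) → M) (e : ι → κ) : partialSum ∅ F e = F e := by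
  have : (univ.filter fun i : ι → κ => ∀ b ∉ (∅ : Finset ι), i b = e b) = {e} := by
    ext i; simp [funext_iff]
  rw [partialSum, this, sum_singleton]

lemma partialSum_univ (F : (ι → κ) → M) (e : ι → κ) : partialSum univ F e = ∑ i, F i := by
  simp [partialSum]

lemma partialSum_congr {B : Finset ι} {F G : (ι → κ) → M} {e : ι → κ}
    (h : ∀ i, (∀ b ∉ B, i b = e b) → F i = G i) : partialSum B F e = partialSum B G e :=
  sum_congr rfl fun i hi => h i (by simpa using hi)

lemma partialSum_insert {B : Finset ι} {a : ι} (ha : a ∉ B) (F : (ι → κ) → M) (e : ι → κ) :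
    partialSum (insert a B) F e = ∑ j, partialSum B F (Function.update e a j) := by
  simp only [partialSum]
  rw [← sum_fiberwise _ (fun i => i a)]
  refine sum_congr rfl fun j _ => sum_congr ?_ fun _ _ => rfl
  ext i
  simp only [mem_filter, mem_univ, true_and, mem_insert, not_or]
  constructor
  · rintro ⟨h, rfl⟩ b hb
    by_cases hba : b = a
    · subst hba; simp
    · simpa [hba] using h b ⟨hba, hb⟩
  · intro h
    refine ⟨fun b hb => by simpa [hb.1] using h b hb.2, by simpa using h a ha⟩

lemma partialSum_update {B : Finset ι} {a : ι} (ha : a ∉ B) (F : (ι → κ) → M) (e : ι → κ)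
    (j : κ) :
    partialSum B F (Function.update e a j) =
      partialSum B (fun i => F (Function.update i a j)) e := by
  refine sum_bij' (fun i _ => Function.update i a (e a)) (fun i _ => Function.update i a j)
    ?_ ?_ ?_ ?_ ?_
  · intro i hi
    simp only [mem_filter, mem_univ, true_and] at hi ⊢
    intro b hb
    by_cases hba : b = a
    · subst hba; simp
    · simpa [hba] using hi b hb
  · intro i hi
    simp only [mem_filter, mem_univ, true_and] at hi ⊢
    intro b hb
    by_cases hba : b = a
    · subst hba; simp
    · simpa [hba] using hi b hb
  · intro i hi
    simp only [mem_filter, mem_univ, true_and] at hi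
    have := hi a ha
    simp at this
    simp [← this]
  · intro i hi
    simp only [mem_filter, mem_univ, true_and] at hi
    have := hi a ha
    simp [← this]
  · intro i hi
    simp only [mem_filter, mem_univ, true_and] at hi
    have := hi a ha
    simp at this
    simp [← this]

lemma partialSum_insert' {B : Finset ι} {a : ι} (ha : a ∉ B) (F : (ι → κ) → M) (e : ι → κ) :
    partialSum (insert a B) F e = partialSum B (fun i => ∑ j, F (Function.update i a j)) e := by
  simp_rw [partialSum_insert ha, partialSum_update ha]
  exact sum_comm

end partialSum

lemma partialSum_mono {ι κ : Type*} [Fintype ι] [DecidableEq ι] [Fintype κ] [DecidableEq κ]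
    {F G : (ι → κ) → ℝ} (h : ∀ i, F i ≤ G i) (B : Finset ι) (e : ι → κ) :
    partialSum B F e ≤ partialSum B G e :=
  sum_le_sum fun i _ => h i

section word

variable {H ι κ : Type*} [NormedAddCommGroup H] [InnerProductSpace ℂ H] {x : κ → H →L[ℂ] H}

/-- The product of the operators `x (i a)`, the letter `a` running through the word `w`. -/
def wordProd (x : κ → H →L[ℂ] H) (w : List ι) (i : ι → κ) : H →L[ℂ] H :=
  (w.map fun a => x (i a)).prod

lemma wordProd_cons_apply (a : ι) (w : List ι) (i : ι → κ) (v : H) :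
    wordProd x (a :: w) i v = x (i a) (wordProd x w i v) := by
  simp [wordProd]

lemma wordProd_update [DecidableEq ι] {a : ι} {w : List ι} (ha : a ∉ w) (i : ι → κ) (j : κ) :
    wordProd x w (Function.update i a j) = wordProd x w i := by
  unfold wordProd
  congr 1
  refine List.map_congr_left fun b hb => ?_
  rw [Function.update_of_ne (by rintro rfl; exact ha hb)]

variable [Fintype ι] [DecidableEq ι] [Fintype κ] [DecidableEq κ]

/-- The sum of `wordProd x w i v` over the letters of `w` outside `A`, those in `A` being
assigned by `e`. -/
def openSum (x : κ → H →L[ℂ] H) (w : List ι) (A : Finset ι) (v : H) (e : ι → κ) : H :=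
  partialSum (w.toFinset \ A) (fun i => wordProd x w i v) e

lemma partialSum_wordProd_cons {a : ι} {B : Finset ι} (ha : a ∉ B) (w : List ι) (v : H)
    (e : ι → κ) :
    partialSum B (fun i => wordProd x (a :: w) i v) e =
      x (e a) (partialSum B (fun i => wordProd x w i v) e) := by
  simp only [wordProd_cons_apply]
  rw [partialSum_congr (G := fun i => x (e a) (wordProd x w i v))
    fun i hi => by rw [hi a ha]]
  simp [partialSum]

lemma partialSum_insert_wordProd_cons {a : ι} {B : Finset ι} (ha : a ∉ B) (w : List ι) (v : H)
    (e : ι → κ) :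
    partialSum (insert a B) (fun i => wordProd x (a :: w) i v) e =
      ∑ j, x j (partialSum B (fun i => wordProd x w i v) (Function.update e a j)) := by
  simp [partialSum_insert ha, partialSum_wordProd_cons ha]

lemma partialSum_wordProd_update {a : ι} {w : List ι} {B : Finset ι} (haB : a ∉ B) (ha : a ∉ w)
    (v : H) (e : ι → κ) (j : κ) :
    partialSum B (fun i => wordProd x w i v) (Function.update e a j) =
      partialSum B (fun i => wordProd x w i v) e := by
  simp [partialSum_update haB, wordProd_update ha]

end word

section positive

variable {H : Type*} [NormedAddCommGroup H] [InnerProductSpace ℂ H] [CompleteSpace H]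

lemma ContinuousLinearMap.IsPositive.norm_apply_sq_le {T : H →L[ℂ] H} (hT : T.IsPositive) (v : H) :
    ‖T v‖ ^ 2 ≤ ‖T‖ * (inner ℂ (T v) v).re := by
  have h0 : 0 ≤ T := (nonneg_iff_isPositive T).2 hT
  set s := CFC.sqrt T with hs
  have hss : s * s = T := CFC.sqrt_mul_sqrt_self T h0
  have hsa : IsSelfAdjoint s := (CFC.sqrt_nonneg T).isSelfAdjoint
  have hn : ‖T‖ = ‖s‖ * ‖s‖ := by
    rw [← hss, ← CStarRing.norm_star_mul_self, hsa.star_eq]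
  have hin : (inner ℂ (T v) v).re = ‖s v‖ ^ 2 := by
    have hv : T v = s (s v) := by rw [← hss]; rfl
    rw [hv, hsa.isSymmetric.apply_clm, ← inner_self_eq_norm_sq (𝕜 := ℂ)]; rfl
  have : ‖T v‖ ≤ ‖s‖ * ‖s v‖ := by
    rw [← hss]; exact s.le_opNorm (s v)
  rw [hin, hn]
  calc ‖T v‖ ^ 2 ≤ (‖s‖ * ‖s v‖) ^ 2 := by gcongr
    _ = _ := by ring

variable {κ : Type*} [Fintype κ] {x : κ → H →L[ℂ] H}

lemma sum_norm_apply_sq_le (hx : ∀ j, (x j).IsPositive) (v : H) :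
    ∑ j, ‖x j v‖ ^ 2 ≤ (‖∑ j, x j‖ * ‖v‖) ^ 2 := by
  have hnn : ∀ j, 0 ≤ x j := fun j => (ContinuousLinearMap.nonneg_iff_isPositive _).2 (hx j)
  have hle (j) : ‖x j‖ ≤ ‖∑ j, x j‖ :=
    CStarAlgebra.norm_le_norm_of_nonneg_of_le (hnn j)
      (single_le_sum (fun j _ => hnn j) (mem_univ j))
  calc ∑ j, ‖x j v‖ ^ 2 ≤ ∑ j, ‖∑ j, x j‖ * (inner ℂ (x j v) v).re := by
        refine sum_le_sum fun j _ => ((hx j).norm_apply_sq_le v).trans ?_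
        exact mul_le_mul_of_nonneg_right (hle j) ((hx j).re_inner_nonneg_left v)
    _ = ‖∑ j, x j‖ * (inner ℂ ((∑ j, x j) v) v).re := by
        rw [← mul_sum, _root_.sum_apply, sum_inner, Complex.re_sum]
    _ ≤ ‖∑ j, x j‖ * (‖∑ j, x j‖ * ‖v‖ * ‖v‖) := by
        gcongr
        exact (re_inner_le_norm (𝕜 := ℂ) _ _).trans
          (mul_le_mul_of_nonneg_right (ContinuousLinearMap.le_opNorm _ _) (norm_nonneg v))
    _ = _ := by ring

lemma norm_apply_sq_le_norm_sum (hx : ∀ j, (x j).IsPositive) (j : κ) (v : H) :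
    ‖x j v‖ ^ 2 ≤ (‖∑ j, x j‖ * ‖v‖) ^ 2 :=
  (single_le_sum (f := fun j => ‖x j v‖ ^ 2) (fun _ _ => by positivity) (mem_univ j)).trans
    (sum_norm_apply_sq_le hx v)

lemma norm_sum_apply_sq_le (hx : ∀ j, (x j).IsPositive) (v : κ → H) :
    ‖∑ j, x j (v j)‖ ^ 2 ≤ ‖∑ j, x j‖ ^ 2 * ∑ j, ‖v j‖ ^ 2 := by
  set u := ∑ j, x j (v j) with hu
  have h1 : ‖u‖ ^ 2 ≤ ∑ j, ‖x j u‖ * ‖v j‖ := by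
    have : ‖u‖ ^ 2 = ∑ j, (inner ℂ (x j u) (v j)).re := by
      rw [← inner_self_eq_norm_sq (𝕜 := ℂ)]
      nth_rewrite 2 [hu]
      rw [inner_sum]
      simp only [map_sum]
      refine sum_congr rfl fun j _ => ?_
      rw [(hx j).isSelfAdjoint.isSymmetric.apply_clm]; rfl
    rw [this]
    exact sum_le_sum fun j _ => re_inner_le_norm (𝕜 := ℂ) _ _
  have h2 : (‖u‖ ^ 2) ^ 2 ≤ (‖∑ j, x j‖ * ‖u‖) ^ 2 * ∑ j, ‖v j‖ ^ 2 := calc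
    (‖u‖ ^ 2) ^ 2 ≤ (∑ j, ‖x j u‖ * ‖v j‖) ^ 2 := by gcongr
    _ ≤ (∑ j, ‖x j u‖ ^ 2) * ∑ j, ‖v j‖ ^ 2 := sum_mul_sq_le_sq_mul_sq _ _ _
    _ ≤ _ := by gcongr; exact sum_norm_apply_sq_le hx u
  rcases (norm_nonneg u).eq_or_lt with h | h
  · rw [← h, zero_pow two_ne_zero]; positivity
  · have : 0 < ‖u‖ ^ 2 := by positivity
    refine le_of_mul_le_mul_left ?_ this
    linarith

variable [DecidableEq κ] {ι : Type*} [Fintype ι] [DecidableEq ι]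

lemma partialSum_norm_openSum_sq_le (hx : ∀ j, (x j).IsPositive) (w : List ι) (A : Finset ι)
    (hA : A ⊆ w.toFinset) (v : H) (e : ι → κ) :
    partialSum A (fun e => ‖openSum x w A v e‖ ^ 2) e ≤
      (‖∑ j, x j‖ ^ w.length * ‖v‖) ^ 2 := by
  induction w generalizing A e with
  | nil =>
    obtain rfl : A = ∅ := by simpa using hA
    simp [openSum, partialSum_empty, wordProd]
  | cons a w ih =>
    set c := ‖∑ j, x j‖ with hc
    suffices h : ∃ A', A' ⊆ w.toFinset ∧
        partialSum A (fun e => ‖openSum x (a :: w) A v e‖ ^ 2) e ≤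
          c ^ 2 * partialSum A' (fun e => ‖openSum x w A' v e‖ ^ 2) e by
      obtain ⟨A', hA', h⟩ := h
      calc _ ≤ _ := h
        _ ≤ c ^ 2 * (c ^ w.length * ‖v‖) ^ 2 := by gcongr; exact ih A' hA' e
        _ = _ := by rw [List.length_cons]; ring
    have mul_partialSum (B : Finset ι) (F : (ι → κ) → ℝ) :
        c ^ 2 * partialSum B F e = partialSum B (fun i => c ^ 2 * F i) e := mul_sum _ _ _
    by_cases haA : a ∈ A
    · by_cases haw : a ∈ w
      · refine ⟨A, fun b hb => ?_, ?_⟩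
        · have := hA hb
          simp only [List.toFinset_cons, mem_insert] at this
          rcases this with rfl | h
          · simpa using haw
          · exact h
        have hB : (a :: w).toFinset \ A = w.toFinset \ A := by
          rw [List.toFinset_cons, insert_sdiff_of_mem _ haA]
        rw [mul_partialSum]
        refine partialSum_mono (fun i => ?_) _ _
        rw [openSum, hB, partialSum_wordProd_cons (by simp [haA]), ← mul_pow]
        exact norm_apply_sq_le_norm_sum hx _ _
      · have haE : a ∉ A.erase a := notMem_erase a A
        have hB : (a :: w).toFinset \ A = w.toFinset \ A.erase a := by
          ext b
          by_cases hba : b = a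
          · subst hba; simp [haA, haw]
          · simp [hba]
        refine ⟨A.erase a, fun b hb => ?_, ?_⟩
        · have := hA (mem_of_mem_erase hb)
          simpa [ne_of_mem_erase hb] using this
        rw [mul_partialSum]
        nth_rewrite 1 [← insert_erase haA]
        rw [partialSum_insert' haE]
        refine partialSum_mono (fun i => ?_) _ _
        have haB : a ∉ w.toFinset \ A.erase a := by simp [haw]
        simp only [openSum, hB, partialSum_wordProd_cons haB, partialSum_wordProd_update haB haw,
          Function.update_self, ← mul_pow]
        exact sum_norm_apply_sq_le hx _
    · by_cases haw : a ∈ w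
      · have hB : (a :: w).toFinset \ A = insert a (w.toFinset \ insert a A) := by
          ext b
          by_cases hba : b = a
          · subst hba; simp [haA]
          · simp [hba]
        refine ⟨insert a A, fun b hb => ?_, ?_⟩
        · rcases mem_insert.1 hb with rfl | h
          · simpa using haw
          · have := hA h
            simp only [List.toFinset_cons, mem_insert] at this
            rcases this with rfl | h
            · exact absurd h haA
            · exact h
        rw [mul_partialSum, partialSum_insert' haA]
        refine partialSum_mono (fun i => ?_) _ _
        rw [openSum, hB, partialSum_insert_wordProd_cons (by simp), ← mul_sum]
        exact norm_sum_apply_sq_le hx _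
      · have haB : a ∉ w.toFinset \ A := by simp [haw]
        have hB : (a :: w).toFinset \ A = insert a (w.toFinset \ A) := by
          rw [List.toFinset_cons, insert_sdiff_of_notMem _ haA]
        refine ⟨A, fun b hb => ?_, ?_⟩
        · have := hA hb
          simp only [List.toFinset_cons, mem_insert] at this
          rcases this with rfl | h
          · exact absurd hb haA
          · exact h
        rw [mul_partialSum]
        refine partialSum_mono (fun i => ?_) _ _
        rw [openSum, hB, partialSum_insert_wordProd_cons haB, ← mul_pow]
        simp only [partialSum_wordProd_update haB haw]
        rw [← _root_.sum_apply]
        gcongr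
        exact ContinuousLinearMap.le_opNorm _ _

lemma norm_sum_wordProd_le (hx : ∀ j, (x j).IsPositive) {w : List ι} (hw : ∀ a, a ∈ w) :
    ‖∑ i : ι → κ, wordProd x w i‖ ≤ ‖∑ j, x j‖ ^ w.length := by
  refine ContinuousLinearMap.opNorm_le_bound _ (by positivity) fun v => ?_
  rcases isEmpty_or_nonempty (ι → κ) with h | ⟨⟨e⟩⟩
  · simp; positivity
  have huniv : w.toFinset = univ := by ext a; simp [hw a]
  have := partialSum_norm_openSum_sq_le hx w ∅ (empty_subset _) v e
  rw [partialSum_empty, openSum, huniv, sdiff_empty, partialSum_univ] at this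
  rw [_root_.sum_apply]
  exact (sq_le_sq₀ (norm_nonneg _) (by positivity)).1 this

end positive

lemma norm_sum_injOn_wordProd_le {H κ : Type*} [NormedAddCommGroup H] [InnerProductSpace ℂ H]
    [CompleteSpace H] [Fintype κ] [DecidableEq κ] {x : κ → H →L[ℂ] H}
    (hx : ∀ j, (x j).IsPositive) (k : ℕ) :
    ∀ {ι : Type} [Fintype ι] [DecidableEq ι] {w : List ι} (_ : ∀ a, a ∈ w) (K : Finset ι)
      (_ : K.card = k),
      ‖∑ i : ι → κ with Set.InjOn i K, wordProd x w i‖ ≤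
        (k.factorial : ℝ) * ‖∑ j, x j‖ ^ w.length := by
  induction k with
  | zero =>
    intro ι _ _ w hw K hK
    obtain rfl : K = ∅ := by simpa using hK
    simpa using norm_sum_wordProd_le hx hw
  | succ k ih =>
    intro ι _ _ w hw K hK
    obtain ⟨a, L, haL, rfl, hL⟩ := card_eq_succ.1 hK
    have hsplit : ∑ i : ι → κ with Set.InjOn i (insert a L : Finset ι), wordProd x w i =
        ∑ i : ι → κ with Set.InjOn i L, wordProd x w i -
          ∑ b ∈ L, ∑ i : ι → κ with Set.InjOn i L ∧ i a = i b, wordProd x w i := by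
      have hcoinc : ∑ b ∈ L, ∑ i : ι → κ with Set.InjOn i L ∧ i a = i b, wordProd x w i =
          ∑ i : ι → κ with Set.InjOn i L ∧ i a ∈ L.image i, wordProd x w i := by
        rw [← sum_biUnion]
        · refine sum_congr ?_ fun _ _ => rfl
          ext i
          simp only [mem_biUnion, mem_filter, mem_univ, true_and, mem_image]
          exact ⟨fun ⟨b, hb, h, hi⟩ => ⟨h, b, hb, hi.symm⟩,
            fun ⟨h, b, hb, hi⟩ => ⟨b, hb, h, hi.symm⟩⟩
        · intro b hb b' hb' hne
          refine disjoint_left.2 fun i hi hi' => hne ?_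
          simp only [mem_filter, mem_univ, true_and] at hi hi'
          exact hi.1 hb hb' (hi.2.symm.trans hi'.2)
      rw [hcoinc, eq_sub_iff_add_eq, ← sum_filter_add_sum_filter_not
        (univ.filter fun i : ι → κ => Set.InjOn i L) (fun i => i a ∈ L.image i), add_comm,
        filter_filter, filter_filter]
      congr 2
      ext i
      simp [Set.injOn_insert (show a ∉ (L : Set ι) from haL)]
    have hterm (b) (hb : b ∈ L) :
        ‖∑ i : ι → κ with Set.InjOn i L ∧ i a = i b, wordProd x w i‖ ≤
          (k.factorial : ℝ) * ‖∑ j, x j‖ ^ w.length := by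
      have hba : b ≠ a := by rintro rfl; exact haL hb
      let r : ι → {c // c ≠ a} := fun c => if h : c = a then ⟨b, hba⟩ else ⟨c, h⟩
      have hra : r a = ⟨b, hba⟩ := by simp [r]
      have hr (c : {c // c ≠ a}) : r c = c := by simp [r, c.2]
      have hw' : ∀ c, c ∈ w.map r := fun c => List.mem_map.2 ⟨c, hw _, hr c⟩
      have hcard : (L.subtype (· ≠ a)).card = k := by
        rw [card_subtype, filter_true_of_mem, hL]
        rintro c hc rfl; exact haL hc
      have := ih hw' (L.subtype (· ≠ a)) hcard
      rw [List.length_map] at this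
      refine le_of_eq_of_le (congrArg _ ?_) this
      refine sum_bij' (fun i _ c => i c) (fun i _ c => i (r c)) ?_ ?_ ?_ ?_ ?_
      · intro i hi
        simp only [mem_filter, mem_univ, true_and] at hi ⊢
        intro c hc c' hc' h
        exact Subtype.ext (hi.1 (by simpa using hc) (by simpa using hc') h)
      · intro i hi
        simp only [mem_filter, mem_univ, true_and] at hi ⊢
        refine ⟨fun c hc c' hc' h => ?_, by rw [hra, hr ⟨b, hba⟩]⟩
        have hca : c ≠ a := by rintro rfl; exact haL hc
        have hca' : c' ≠ a := by rintro rfl; exact haL hc'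
        simp only [hr ⟨c, hca⟩, hr ⟨c', hca'⟩] at h
        exact congrArg Subtype.val (hi (by simpa using hc) (by simpa using hc') h)
      · intro i hi
        simp only [mem_filter, mem_univ, true_and] at hi
        funext c
        by_cases hc : c = a
        · subst hc; simp [hra, hi.2]
        · simp only [hr ⟨c, hc⟩]
      · intro i _
        funext c
        simp only [hr c]
      · intro i hi
        simp only [mem_filter, mem_univ, true_and] at hi
        simp only [wordProd, List.map_map]
        congr 1
        refine List.map_congr_left fun c _ => ?_
        by_cases hc : c = a
        · subst hc; simp [hra, hi.2]
        · simp [hr ⟨c, hc⟩]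
    rw [hsplit]
    calc _ ≤ ‖∑ i : ι → κ with Set.InjOn i L, wordProd x w i‖ +
          ∑ b ∈ L, ‖∑ i : ι → κ with Set.InjOn i L ∧ i a = i b, wordProd x w i‖ :=
          (norm_sub_le _ _).trans (by gcongr; exact norm_sum_le _ _)
      _ ≤ (k.factorial : ℝ) * ‖∑ j, x j‖ ^ w.length +
          ∑ b ∈ L, (k.factorial : ℝ) * ‖∑ j, x j‖ ^ w.length :=
          add_le_add (ih hw L hL) (sum_le_sum hterm)
      _ = _ := by
          rw [sum_const, hL, Nat.factorial_succ, nsmul_eq_mul]; push_cast; ring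

lemma pow_mul_factorial_le_pow_mul_descFactorial {n d : ℕ} (hdn : d ≤ n) :
    n ^ d * d.factorial ≤ d ^ d * n.descFactorial d := by
  rw [← Nat.descFactorial_self, Nat.descFactorial_eq_prod_range, Nat.descFactorial_eq_prod_range]
  nth_rewrite 1 [← card_range d]
  nth_rewrite 5 [← card_range d]
  rw [← prod_const, ← prod_const, ← prod_mul_distrib, ← prod_mul_distrib]
  refine prod_le_prod' fun k _ => ?_
  rw [Nat.mul_sub, Nat.mul_sub, mul_comm n d]
  exact Nat.sub_le_sub_left (Nat.mul_le_mul_right k hdn) _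

lemma avgProd_one {A : Type*} [Ring A] [Module ℝ A] {n : ℕ} (hn : 1 ≤ n) (x : Fin n → A) :
    avgProd n 1 x = (n : ℝ)⁻¹ • ∑ j, x j := by
  unfold avgProd
  congr 1
  · obtain ⟨m, rfl⟩ := Nat.exists_eq_add_of_le' hn
    rw [Nat.add_sub_cancel, Nat.factorial_succ]
    have := Nat.factorial_pos m
    push_cast
    field_simp
  · rw [filter_true_of_mem fun i _ => Function.injective_of_subsingleton i]
    exact Fintype.sum_equiv (Equiv.funUnique (Fin 1) (Fin n)) _ _ fun i => by
      simp [List.finRange_succ]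

/-- Dimension-free noncommutative AGM inequality (norm version): for positive
bounded operators `x_1, …, x_n` on a complex Hilbert space and `1 ≤ d ≤ n`,
`‖P_d(x_1,…,x_n)‖ ^ (1/d) ≤ d ‖P_1(x_1,…,x_n)‖`. -/
theorem norm_avgProd_rpow_le {H : Type*} [NormedAddCommGroup H]
    [InnerProductSpace ℂ H] [CompleteSpace H] (n d : ℕ) (hd : 1 ≤ d) (hdn : d ≤ n)
    (x : Fin n → H →L[ℂ] H) (hx : ∀ j, (x j).IsPositive) :
    ‖avgProd n d x‖ ^ ((1 : ℝ) / d) ≤ (d : ℝ) * ‖avgProd n 1 x‖ := by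
  have hsum : ‖∑ i : Fin d → Fin n with Function.Injective i,
      ((List.finRange d).map fun k => x (i k)).prod‖ ≤ (d.factorial : ℝ) * ‖∑ j, x j‖ ^ d := by
    simpa [wordProd] using norm_sum_injOn_wordProd_le hx d (List.mem_finRange (n := d)) univ
      (by simp)
  have hn : (0 : ℝ) < n := by exact_mod_cast hd.trans hdn
  have hcoef : ((n - d).factorial : ℝ) / n.factorial * d.factorial ≤ (d / n : ℝ) ^ d := by
    have h : (n : ℝ) ^ d * d.factorial ≤ d ^ d * n.descFactorial d := by
      exact_mod_cast pow_mul_factorial_le_pow_mul_descFactorial hdn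
    have hf : (n.factorial : ℝ) = (n - d).factorial * n.descFactorial d := by
      exact_mod_cast (Nat.factorial_mul_descFactorial hdn).symm
    have hpos : (0 : ℝ) < (n - d).factorial := by positivity
    have hdesc : (0 : ℝ) < n.descFactorial d := by
      exact_mod_cast Nat.pos_of_ne_zero (by simpa [Nat.descFactorial_eq_zero_iff_lt] using hdn)
    rw [hf, div_pow, div_mul_eq_mul_div, mul_div_mul_left _ _ hpos.ne',
      div_le_div_iff₀ hdesc (by positivity)]
    linarith
  have hmain : ‖avgProd n d x‖ ≤ (d * ‖avgProd n 1 x‖) ^ d := by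
    rw [avgProd_one (hd.trans hdn), norm_smul, Real.norm_of_nonneg (by positivity)]
    calc ‖avgProd n d x‖ = ((n - d).factorial : ℝ) / n.factorial *
          ‖∑ i : Fin d → Fin n with Function.Injective i,
            ((List.finRange d).map fun k => x (i k)).prod‖ := by
          rw [avgProd, norm_smul, Real.norm_of_nonneg (by positivity)]
      _ ≤ ((n - d).factorial : ℝ) / n.factorial * (d.factorial * ‖∑ j, x j‖ ^ d) := by gcongr
      _ = ((n - d).factorial : ℝ) / n.factorial * d.factorial * ‖∑ j, x j‖ ^ d := by ring
      _ ≤ (d / n : ℝ) ^ d * ‖∑ j, x j‖ ^ d := by gcongr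
      _ = _ := by rw [← mul_pow]; ring
  rw [one_div, Real.rpow_inv_le_iff_of_pos (norm_nonneg _) (by positivity)
    (by exact_mod_cast hd), Real.rpow_natCast]
  exact hmain
end

section
/- Let H be a complex Hilbert space, 2 ≤ d ≤ n, and let x_1,…,x_n be positive bounded operators on H with ∑_{i=1}^n x_i = n·1. Set a_i := x_i − 1 and S := ‖∑_{i=1}^n x_i²‖^{1/2}. Then, in the order of self-adjoint operators, −((n−d)!/n!)·d!·S^{d−2}·∑_{i=1}^n a_i² ≤ P_d(a_1,…,a_n) ≤ ((n−d)!/n!)·d!·S^{d−2}·∑_{i=1}^n a_i². -/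
open scoped BigOperators

theorem list_map_update_of_notMem {ι K β : Type*} [DecidableEq K] (g : ι → β) {k : K}
    {w : List K} (hk : k ∉ w) (j : K → ι) (m : ι) :
    w.map (fun t => g (Function.update j k m t)) = w.map (fun t => g (j t)) :=
  List.map_congr_left fun t ht => by
    rw [Function.update_of_ne (ne_of_mem_of_not_mem ht hk)]

section FunctionSums

variable {ι K : Type*} [Fintype ι] [Fintype K] [DecidableEq K]

/-- Resampling one coordinate of a uniformly summed function only multiplies the sum by the number
of values. -/
theorem sum_sum_update {M : Type*} [AddCommMonoid M] (k : K) (f : (K → ι) → M) :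
    ∑ j : K → ι, ∑ m, f (Function.update j k m) = Fintype.card ι • ∑ j, f j := by
  have h : ∑ p : (K → ι) × ι, f (Function.update p.1 k p.2) = ∑ p : (K → ι) × ι, f p.1 := by
    refine Finset.sum_nbij' (fun p => (Function.update p.1 k p.2, p.1 k))
      (fun p => (Function.update p.1 k p.2, p.1 k)) ?_ ?_ ?_ ?_ ?_ <;> simp
  rw [Fintype.sum_prod_type, Fintype.sum_prod_type] at h
  rw [h]
  simp [Finset.smul_sum]

/-- If a letter occurs exactly once in a word, summing over its index factors out the sum of the
family, so the total vanishes when that sum does. -/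
theorem sum_word_eq_zero {A : Type*} [Ring A] [Module ℝ A] [Nonempty ι] (a : ι → A)
    (ha : ∑ i, a i = 0) (k : K) (w : List K) (hk : w.count k = 1) :
    ∑ j : K → ι, (w.map fun t => a (j t)).prod = 0 := by
  obtain ⟨u, u', rfl⟩ := List.append_of_mem (List.count_pos_iff.1 (hk ▸ Nat.one_pos))
  have hu : k ∉ u ∧ k ∉ u' := by
    simp only [List.count_append, List.count_cons_self] at hk
    exact ⟨List.count_eq_zero.1 (by omega), List.count_eq_zero.1 (by omega)⟩
  have h := sum_sum_update (ι := ι) k fun j => ((u ++ k :: u').map fun t => a (j t)).prod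
  have h0 : ∀ j : K → ι,
      ∑ m, ((u ++ k :: u').map fun t => a (Function.update j k m t)).prod = 0 := by
    intro j
    simp only [List.map_append, List.map_cons, list_map_update_of_notMem a hu.1,
      list_map_update_of_notMem a hu.2, Function.update_self, List.prod_append, List.prod_cons]
    rw [← Finset.mul_sum, ← Finset.sum_mul, ha, zero_mul, mul_zero]
  simp only [h0, Finset.sum_const_zero] at h
  rw [← Nat.cast_smul_eq_nsmul ℝ] at h
  exact (smul_eq_zero_iff_right (Nat.cast_ne_zero.2 Fintype.card_ne_zero)).1 h.symm

end FunctionSums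

section RowBounds

variable {H : Type*} [NormedAddCommGroup H] [InnerProductSpace ℂ H]
variable {ι : Type*} [Fintype ι]

theorem norm_sum_inner_sq_le (f g : ι → H) :
    ‖∑ i, inner ℂ (f i) (g i)‖ ^ 2 ≤ (∑ i, ‖f i‖ ^ 2) * ∑ i, ‖g i‖ ^ 2 := by
  refine le_trans ?_ (Finset.sum_mul_sq_le_sq_mul_sq Finset.univ _ _)
  gcongr
  exact (norm_sum_le _ _).trans (Finset.sum_le_sum fun i _ => norm_inner_le_norm _ _)

/-- A column bound for a family of symmetric operators implies the corresponding row bound. -/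
theorem norm_sum_apply_sq_le_s11 {a : ι → H →L[ℂ] H} {S : ℝ}
    (hsymm : ∀ i u v, inner ℂ (a i u) v = inner ℂ u (a i v))
    (hS : ∀ u, ∑ i, ‖a i u‖ ^ 2 ≤ S ^ 2 * ‖u‖ ^ 2) (f : ι → H) :
    ‖∑ i, a i (f i)‖ ^ 2 ≤ S ^ 2 * ∑ i, ‖f i‖ ^ 2 := by
  set y := ∑ i, a i (f i) with hy
  have h1 : inner ℂ y y = ∑ i, inner ℂ (f i) (a i y) := by
    conv_lhs => rw [hy, sum_inner]
    exact Finset.sum_congr rfl fun i _ => hsymm _ _ _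
  have h2 := norm_sum_inner_sq_le f fun i => a i y
  rw [← h1, inner_self_eq_norm_sq_to_K] at h2
  have h3 : (‖y‖ ^ 2) ^ 2 ≤ (∑ i, ‖f i‖ ^ 2) * (S ^ 2 * ‖y‖ ^ 2) := by
    refine le_trans ?_ (h2.trans (by gcongr; exact hS y))
    simp
  rcases (sq_nonneg ‖y‖).eq_or_lt with h0 | h0
  · rw [← h0]
    positivity
  · nlinarith

variable {K : Type*} [Fintype K] [DecidableEq K]

/-- Words are absorbed letter by letter into the left vector: a first occurrence opens an index, a
last occurrence sums it out, and each step costs at most a factor `S`. -/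
theorem norm_sum_inner_word_sq_le {a : ι → H →L[ℂ] H} {S : ℝ}
    (hsymm : ∀ i u v, inner ℂ (a i u) v = inner ℂ u (a i v))
    (hS : ∀ u, ∑ i, ‖a i u‖ ^ 2 ≤ S ^ 2 * ‖u‖ ^ 2) (v : H) (w : List K) (k : K) (O : Finset K)
    (φ : (K → ι) → H) (hO : O ⊆ (k :: w).toFinset)
    (hcount : ∀ l ∈ k :: w, l ∉ O → 2 ≤ (k :: w).count l)
    (hφ : ∀ l ∉ O, ∀ j m, φ (Function.update j l m) = φ j) :
    ((Fintype.card ι : ℝ) ^ (k :: w).toFinset.card *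
        ‖∑ j : K → ι, inner ℂ (φ j) (((k :: w).map fun t => a (j t)).prod v)‖) ^ 2 ≤
      S ^ (2 * w.length) * ((Fintype.card ι : ℝ) ^ O.card *
        (Fintype.card ι : ℝ) ^ Fintype.card K * (∑ j, ‖φ j‖ ^ 2) * ∑ i, ‖a i v‖ ^ 2) := by
  induction w generalizing k O φ with
  | nil =>
    have hk : k ∈ O := by
      by_contra hk
      simpa using hcount k (by simp) hk
    obtain rfl : O = {k} := by
      refine Finset.Subset.antisymm (by simpa using hO) (by simpa using hk)
    have h1 := norm_sum_inner_sq_le φ fun j => a (j k) v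
    have h2 := sum_sum_update (ι := ι) k fun j => ‖a (j k) v‖ ^ 2
    simp only [Function.update_self, Finset.sum_const, Finset.card_univ, Fintype.card_pi,
      Finset.prod_const, nsmul_eq_mul, Nat.cast_pow] at h2
    simp only [List.map_cons, List.map_nil, List.prod_cons, List.prod_nil, mul_one, mul_pow,
      List.toFinset_cons, List.toFinset_nil, insert_empty_eq, Finset.card_singleton, pow_one,
      List.length_nil, mul_zero, pow_zero, one_mul]
    calc _ ≤ (Fintype.card ι : ℝ) ^ 2 * ((∑ j, ‖φ j‖ ^ 2) * ∑ j : K → ι, ‖a (j k) v‖ ^ 2) := by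
          gcongr
      _ = Fintype.card ι * (∑ j, ‖φ j‖ ^ 2) *
            (Fintype.card ι * ∑ j : K → ι, ‖a (j k) v‖ ^ 2) := by ring
      _ = _ := by rw [← h2]; ring
  | cons k' w ih =>
    by_cases hk : k ∈ k' :: w
    · have hset : (k :: k' :: w).toFinset = (k' :: w).toFinset := by
        rw [List.toFinset_cons, Finset.insert_eq_of_mem (List.mem_toFinset.2 hk)]
      have hinner : ∀ j : K → ι,
          inner ℂ (φ j) (((k :: k' :: w).map fun t => a (j t)).prod v) =
            inner ℂ (a (j k) (φ j)) (((k' :: w).map fun t => a (j t)).prod v) := by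
        intro j
        rw [List.map_cons, List.prod_cons, mul_apply_eq_comp, ← hsymm]
      rw [hset]
      simp only [hinner]
      by_cases hkO : k ∈ O
      · refine (ih k' O (fun j => a (j k) (φ j)) (hset ▸ hO) ?_ ?_).trans ?_
        · intro l hl hlO
          have hlk : k ≠ l := fun h => hlO (h ▸ hkO)
          simpa [List.count_cons, hlk] using hcount l (List.mem_cons_of_mem _ hl) hlO
        · intro l hl j m
          rw [hφ l hl, Function.update_of_ne (ne_of_mem_of_not_mem hkO hl)]
        · have hsum : ∑ j, ‖a (j k) (φ j)‖ ^ 2 ≤ S ^ 2 * ∑ j, ‖φ j‖ ^ 2 := by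
            rw [Finset.mul_sum]
            refine Finset.sum_le_sum fun j _ => le_trans ?_ (hS (φ j))
            exact Finset.single_le_sum (f := fun i => ‖a i (φ j)‖ ^ 2)
              (fun i _ => sq_nonneg _) (Finset.mem_univ (j k))
          have hnn : 0 ≤ S ^ (2 * w.length) := (even_two_mul _).pow_nonneg S
          calc _ ≤ S ^ (2 * w.length) * ((Fintype.card ι : ℝ) ^ O.card *
                (Fintype.card ι : ℝ) ^ Fintype.card K * (S ^ 2 * ∑ j, ‖φ j‖ ^ 2) *
                ∑ i, ‖a i v‖ ^ 2) := by gcongr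
            _ = _ := by rw [List.length_cons]; ring
      · refine (ih k' (insert k O) (fun j => a (j k) (φ j)) ?_ ?_ ?_).trans ?_
        · exact Finset.insert_subset (List.mem_toFinset.2 hk) (hset ▸ hO)
        · intro l hl hlO
          rw [Finset.mem_insert, not_or] at hlO
          simpa [List.count_cons, Ne.symm hlO.1] using
            hcount l (List.mem_cons_of_mem _ hl) hlO.2
        · intro l hl j m
          rw [Finset.mem_insert, not_or] at hl
          rw [hφ l hl.2, Function.update_of_ne (Ne.symm hl.1)]
        · have hsum : Fintype.card ι * ∑ j, ‖a (j k) (φ j)‖ ^ 2 ≤ S ^ 2 * ∑ j, ‖φ j‖ ^ 2 := by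
            rw [← nsmul_eq_mul, ← sum_sum_update k, Finset.mul_sum]
            refine Finset.sum_le_sum fun j _ => ?_
            simpa only [Function.update_self, hφ k hkO] using hS (φ j)
          have hnn : 0 ≤ S ^ (2 * w.length) := (even_two_mul _).pow_nonneg S
          rw [Finset.card_insert_of_notMem hkO]
          calc _ = S ^ (2 * w.length) * ((Fintype.card ι : ℝ) ^ O.card *
                (Fintype.card ι : ℝ) ^ Fintype.card K *
                (Fintype.card ι * ∑ j, ‖a (j k) (φ j)‖ ^ 2) *
                ∑ i, ‖a i v‖ ^ 2) := by ring
            _ ≤ S ^ (2 * w.length) * ((Fintype.card ι : ℝ) ^ O.card *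
                (Fintype.card ι : ℝ) ^ Fintype.card K * (S ^ 2 * ∑ j, ‖φ j‖ ^ 2) *
                ∑ i, ‖a i v‖ ^ 2) := by gcongr
            _ = _ := by rw [List.length_cons]; ring
    · have hkO : k ∈ O := by
        by_contra hkO
        have := hcount k List.mem_cons_self hkO
        rw [List.count_cons_self, List.count_eq_zero.2 hk] at this
        omega
      have hcard : (k :: k' :: w).toFinset.card = (k' :: w).toFinset.card + 1 := by
        rw [List.toFinset_cons, Finset.card_insert_of_notMem (by rwa [List.mem_toFinset])]
      have hOcard : O.card = (O.erase k).card + 1 := (Finset.card_erase_add_one hkO).symm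
      have hinner : Fintype.card ι *
          ‖∑ j : K → ι, inner ℂ (φ j) (((k :: k' :: w).map fun t => a (j t)).prod v)‖ =
          ‖∑ j : K → ι, inner ℂ (∑ m, a m (φ (Function.update j k m)))
            (((k' :: w).map fun t => a (j t)).prod v)‖ := by
        have h := sum_sum_update (ι := ι) k fun j =>
          inner ℂ (φ j) (((k :: k' :: w).map fun t => a (j t)).prod v)
        have h' := congrArg norm h
        rw [nsmul_eq_mul, norm_mul, Complex.norm_natCast] at h'
        rw [← h']
        congr 1
        refine Finset.sum_congr rfl fun j _ => ?_
        rw [sum_inner]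
        refine Finset.sum_congr rfl fun m _ => ?_
        rw [List.map_cons, List.prod_cons, mul_apply_eq_comp, Function.update_self,
          list_map_update_of_notMem a hk, hsymm]
      rw [hcard, hOcard, pow_succ (Fintype.card ι : ℝ) (k' :: w).toFinset.card,
        mul_assoc (_ ^ (k' :: w).toFinset.card), hinner]
      refine (ih k' (O.erase k) (fun j => ∑ m, a m (φ (Function.update j k m))) ?_ ?_ ?_).trans ?_
      · intro l hl
        rw [Finset.mem_erase] at hl
        have := hO hl.2
        rw [List.toFinset_cons, Finset.mem_insert] at this
        exact this.resolve_left hl.1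
      · intro l hl hlO
        have hlk : l ≠ k := fun h => hk (h ▸ hl)
        have hlO' : l ∉ O := fun h => hlO (Finset.mem_erase.2 ⟨hlk, h⟩)
        simpa [List.count_cons, Ne.symm hlk] using hcount l (List.mem_cons_of_mem _ hl) hlO'
      · intro l hl j m
        refine Finset.sum_congr rfl fun i _ => ?_
        by_cases hlk : l = k
        · rw [hlk, Function.update_idem]
        · have hlO : l ∉ O := fun h => hl (Finset.mem_erase.2 ⟨hlk, h⟩)
          rw [Function.update_comm hlk, hφ l hlO]
      · have hsum : ∑ j, ‖∑ m, a m (φ (Function.update j k m))‖ ^ 2 ≤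
            S ^ 2 * (Fintype.card ι * ∑ j, ‖φ j‖ ^ 2) := by
          rw [← nsmul_eq_mul, ← sum_sum_update k, Finset.mul_sum]
          exact Finset.sum_le_sum fun j _ => norm_sum_apply_sq_le_s11 hsymm hS _
        have hnn : 0 ≤ S ^ (2 * w.length) := (even_two_mul _).pow_nonneg S
        calc _ ≤ S ^ (2 * w.length) * ((Fintype.card ι : ℝ) ^ (O.erase k).card *
              (Fintype.card ι : ℝ) ^ Fintype.card K *
              (S ^ 2 * (Fintype.card ι * ∑ j, ‖φ j‖ ^ 2)) * ∑ i, ‖a i v‖ ^ 2) := by gcongr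
          _ = _ := by rw [List.length_cons]; ring

/-- The quadratic form of the sum of a word in which every letter occurs, summed freely over the
indices of its letters, for a centred family of symmetric operators. -/
theorem norm_inner_sum_word_le [Nonempty ι] {a : ι → H →L[ℂ] H} {S : ℝ} (hS0 : 0 ≤ S)
    (hsum : ∑ i, a i = 0)
    (hsymm : ∀ i u v, inner ℂ (a i u) v = inner ℂ u (a i v))
    (hS : ∀ u, ∑ i, ‖a i u‖ ^ 2 ≤ S ^ 2 * ‖u‖ ^ 2) (v : H) (w : List K) (hw : 2 ≤ w.length)
    (hmem : ∀ k, k ∈ w) :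
    ‖inner ℂ v ((∑ j : K → ι, (w.map fun t => a (j t)).prod) v)‖ ≤
      S ^ (w.length - 2) * ∑ i, ‖a i v‖ ^ 2 := by
  by_cases hone : ∃ k, w.count k = 1
  · obtain ⟨k, hk⟩ := hone
    rw [sum_word_eq_zero a hsum k w hk, zero_apply, inner_zero_right, norm_zero]
    positivity
  have htwo : ∀ k, 2 ≤ w.count k := fun k => by
    have h1 : w.count k ≠ 1 := fun h => hone ⟨k, h⟩
    have h2 := List.count_pos_iff.2 (hmem k)
    omega
  match w, hw with
  | k :: k' :: w, _ =>
    have hk : k ∈ k' :: w := by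
      have := htwo k
      rw [List.count_cons_self] at this
      exact List.count_pos_iff.1 (by omega)
    have hset : (k' :: w).toFinset = Finset.univ := by
      refine Finset.eq_univ_of_forall fun l => List.mem_toFinset.2 ?_
      rcases List.mem_cons.1 (hmem l) with rfl | h
      exacts [hk, h]
    have hinner : ‖inner ℂ v ((∑ j : K → ι, ((k :: k' :: w).map fun t => a (j t)).prod) v)‖ =
        ‖∑ j : K → ι, inner ℂ (a (j k) v) (((k' :: w).map fun t => a (j t)).prod v)‖ := by
      rw [sum_apply, inner_sum]
      congr 1
      refine Finset.sum_congr rfl fun j _ => ?_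
      rw [List.map_cons, List.prod_cons, mul_apply_eq_comp, hsymm]
    have h := norm_sum_inner_word_sq_le hsymm hS v w k' {k} (fun j => a (j k) v)
      (hset ▸ Finset.subset_univ _)
      (fun l _ hl => by
        rw [Finset.mem_singleton] at hl
        simpa [List.count_cons, Ne.symm hl] using htwo l)
      (fun l hl j m => by
        rw [Finset.mem_singleton] at hl
        rw [Function.update_of_ne (Ne.symm hl)])
    have h2 := sum_sum_update (ι := ι) k fun j => ‖a (j k) v‖ ^ 2
    simp only [Function.update_self, Finset.sum_const, Finset.card_univ, Fintype.card_pi,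
      Finset.prod_const, nsmul_eq_mul, Nat.cast_pow] at h2
    rw [hset, Finset.card_univ, ← hinner, Finset.card_singleton, pow_one] at h
    have hN : (0 : ℝ) < (Fintype.card ι : ℝ) ^ Fintype.card K := by
      have : 0 < Fintype.card ι := Fintype.card_pos
      positivity
    have h3 : ((Fintype.card ι : ℝ) ^ Fintype.card K *
        ‖inner ℂ v ((∑ j : K → ι, ((k :: k' :: w).map fun t => a (j t)).prod) v)‖) ^ 2 ≤
        ((Fintype.card ι : ℝ) ^ Fintype.card K * (S ^ w.length * ∑ i, ‖a i v‖ ^ 2)) ^ 2 := by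
      refine h.trans (le_of_eq ?_)
      rw [mul_right_comm (Fintype.card ι : ℝ), ← h2]
      ring
    have h4 := le_of_mul_le_mul_left (abs_le_of_sq_le_sq' h3 (by positivity)).2 hN
    simpa using h4

end RowBounds

section InjectiveSums

variable {ι : Type*} {d : ℕ}

/-- The determinant of the coincidence matrix of a tuple detects injectivity. -/
theorem sum_sign_mul_ite_comp_eq [DecidableEq ι] (i : Fin d → ι) :
    ∑ σ : Equiv.Perm (Fin d), ((Equiv.Perm.sign σ : ℤ) * if i ∘ σ = i then 1 else 0) =
      if Function.Injective i then 1 else 0 := by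
  let M : Matrix (Fin d) (Fin d) ℤ := Matrix.of fun p q => if i p = i q then 1 else 0
  have hM : M.det = ∑ σ : Equiv.Perm (Fin d),
      ((Equiv.Perm.sign σ : ℤ) * if i ∘ σ = i then 1 else 0) := by
    rw [Matrix.det_apply']
    refine Finset.sum_congr rfl fun σ _ => ?_
    simp [M, Finset.prod_ite_zero, funext_iff]
  rw [← hM]
  split_ifs with hi
  · have : M = 1 := by
      ext p q
      simp [M, Matrix.one_apply, hi.eq_iff]
    rw [this, Matrix.det_one]
  · simp only [Function.Injective, not_forall] at hi
    obtain ⟨p, q, hpq, hne⟩ := hi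
    exact Matrix.det_zero_of_row_eq hne (funext fun t => by simp [M, hpq])

theorem sum_injective_eq_sum_perm [Fintype ι] [DecidableEq ι] {A : Type*} [AddCommGroup A]
    (F : (Fin d → ι) → A) :
    ∑ i : Fin d → ι with Function.Injective i, F i =
      ∑ σ : Equiv.Perm (Fin d), (Equiv.Perm.sign σ : ℤ) •
        ∑ i : Fin d → ι with i ∘ σ = i, F i := by
  have h : ∀ i : Fin d → ι, (if Function.Injective i then F i else 0) =
      ∑ σ : Equiv.Perm (Fin d), (Equiv.Perm.sign σ : ℤ) • if i ∘ σ = i then F i else 0 := by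
    intro i
    have := congrArg (· • F i) (sum_sign_mul_ite_comp_eq i)
    simp only [Finset.sum_smul, ite_smul, one_smul, zero_smul, mul_smul] at this
    exact this.symm
  simp only [Finset.sum_filter, h, Finset.smul_sum]
  exact Finset.sum_comm

/-- Tuples fixed by a permutation are the functions on its set of orbits. -/
theorem exists_quotient_sum_comp_eq [Fintype ι] [DecidableEq ι] {A : Type*} [AddCommMonoid A]
    (σ : Equiv.Perm (Fin d)) (F : (Fin d → ι) → A) :
    ∃ (K : Type) (_ : Fintype K) (_ : DecidableEq K) (b : Fin d → K), Function.Surjective b ∧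
      ∑ i : Fin d → ι with i ∘ σ = i, F i = ∑ j : K → ι, F (j ∘ b) := by
  classical
  let r : Setoid (Fin d) := Relation.EqvGen.setoid fun p q => σ p = q
  refine ⟨Quotient r, inferInstance, inferInstance, Quotient.mk r, Quotient.mk_surjective, ?_⟩
  symm
  refine Finset.sum_bij (fun j _ => j ∘ Quotient.mk r) ?_ ?_ ?_ ?_
  · intro j _
    refine Finset.mem_filter.2 ⟨Finset.mem_univ _, funext fun p => congrArg j ?_⟩
    exact (Quotient.sound (Relation.EqvGen.rel p (σ p) rfl)).symm
  · intro j _ j' _ h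
    exact Quotient.mk_surjective.injective_comp_right h
  · intro i hi
    have hi' : r ≤ Setoid.ker i := Setoid.eqvGen_le fun p q hpq => by
      subst hpq
      exact (congrFun (Finset.mem_filter.1 hi).2 p).symm
    exact ⟨Quotient.lift i fun p q h => hi' h, Finset.mem_univ _, rfl⟩
  · intro j _
    rfl

end InjectiveSums

section InjectiveProducts

variable {H : Type*} [NormedAddCommGroup H] [InnerProductSpace ℂ H]

theorem inner_list_prod_left {ι : Type*} {a : ι → H →L[ℂ] H}
    (hsymm : ∀ i u v, inner ℂ (a i u) v = inner ℂ u (a i v)) (w : List ι) (u v : H) :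
    inner ℂ ((w.map a).prod u) v = inner ℂ u ((w.reverse.map a).prod v) := by
  induction w generalizing u v with
  | nil => simp
  | cons i w ih =>
    rw [List.map_cons, List.prod_cons, mul_apply_eq_comp, hsymm, ih, List.reverse_cons,
      List.map_append, List.prod_append, mul_apply_eq_comp]
    simp

variable {ι : Type*} [Fintype ι] [DecidableEq ι]

theorem norm_inner_sum_injective_le [Nonempty ι] {a : ι → H →L[ℂ] H} {S : ℝ} (hS0 : 0 ≤ S)
    (hsum : ∑ i, a i = 0)
    (hsymm : ∀ i u v, inner ℂ (a i u) v = inner ℂ u (a i v))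
    (hS : ∀ u, ∑ i, ‖a i u‖ ^ 2 ≤ S ^ 2 * ‖u‖ ^ 2) (v : H) {d : ℕ} (hd : 2 ≤ d) :
    ‖inner ℂ v ((∑ i : Fin d → ι with Function.Injective i,
        ((List.finRange d).map fun t => a (i t)).prod) v)‖ ≤
      d.factorial * S ^ (d - 2) * ∑ i, ‖a i v‖ ^ 2 := by
  have hperm : ∀ σ : Equiv.Perm (Fin d),
      ‖inner ℂ v (((Equiv.Perm.sign σ : ℤ) • ∑ i : Fin d → ι with i ∘ σ = i,
        ((List.finRange d).map fun t => a (i t)).prod) v)‖ ≤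
      S ^ (d - 2) * ∑ i, ‖a i v‖ ^ 2 := by
    intro σ
    obtain ⟨K, _, _, b, hb, h⟩ := exists_quotient_sum_comp_eq σ
      fun i : Fin d → ι => ((List.finRange d).map fun t => a (i t)).prod
    have hw := norm_inner_sum_word_le hS0 hsum hsymm hS v ((List.finRange d).map b) (by simpa)
      (fun k => by simpa using hb k)
    simp only [List.map_map, List.length_map, List.length_finRange] at hw
    rw [h]
    rcases Int.units_eq_one_or (Equiv.Perm.sign σ) with hσ | hσ
    · rw [hσ, Units.val_one, one_smul]
      exact hw
    · rw [hσ, Units.val_neg, Units.val_one, neg_smul, one_smul, neg_apply, inner_neg_right,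
        norm_neg]
      exact hw
  rw [sum_injective_eq_sum_perm, sum_apply, inner_sum]
  refine (norm_sum_le _ _).trans ((Finset.sum_le_sum fun σ _ => hperm σ).trans (le_of_eq ?_))
  rw [Finset.sum_const, Finset.card_univ, Fintype.card_perm, Fintype.card_fin, nsmul_eq_mul,
    mul_assoc]

theorem inner_sum_injective_left {a : ι → H →L[ℂ] H}
    (hsymm : ∀ i u v, inner ℂ (a i u) v = inner ℂ u (a i v)) (d : ℕ) (u v : H) :
    inner ℂ ((∑ i : Fin d → ι with Function.Injective i,
        ((List.finRange d).map fun t => a (i t)).prod) u) v =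
      inner ℂ u ((∑ i : Fin d → ι with Function.Injective i,
        ((List.finRange d).map fun t => a (i t)).prod) v) := by
  rw [sum_apply, sum_apply, sum_inner, inner_sum]
  refine Finset.sum_nbij' (fun i => i ∘ Fin.rev) (fun i => i ∘ Fin.rev) ?_ ?_ ?_ ?_ ?_
  · intro i hi
    simpa [Fin.rev_injective] using (Finset.mem_filter.1 hi).2.comp Fin.rev_injective
  · intro i hi
    simpa [Fin.rev_injective] using (Finset.mem_filter.1 hi).2.comp Fin.rev_injective
  · intro i _
    ext t
    simp
  · intro i _
    ext t
    simp
  · intro i _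
    have h := inner_list_prod_left hsymm ((List.finRange d).map i) u v
    rw [← List.map_reverse, List.finRange_reverse] at h
    rw [List.map_map, List.map_map, List.map_map] at h
    exact h

end InjectiveProducts

section CentredPositive

variable {H : Type*} [NormedAddCommGroup H] [InnerProductSpace ℂ H]
variable {ι : Type*} [Fintype ι]

theorem re_inner_sum_sq_apply {a : ι → H →L[ℂ] H}
    (hsymm : ∀ i u v, inner ℂ (a i u) v = inner ℂ u (a i v)) (u : H) :
    (inner ℂ ((∑ i, a i ^ 2) u) u).re = ∑ i, ‖a i u‖ ^ 2 := by
  rw [sum_apply, sum_inner, Complex.re_sum]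
  refine Finset.sum_congr rfl fun i _ => ?_
  rw [pow_two, mul_apply_eq_comp, hsymm]
  exact inner_self_eq_norm_sq (𝕜 := ℂ) _

/-- Centring a family with mean one does not increase its column norm. -/
theorem sum_norm_sub_one_apply_sq_le {x : ι → H →L[ℂ] H}
    (hsymm : ∀ i u v, inner ℂ (x i u) v = inner ℂ u (x i v))
    (hsum : ∑ i, x i = Fintype.card ι • (1 : H →L[ℂ] H)) (u : H) :
    ∑ i, ‖(x i - 1) u‖ ^ 2 ≤ ‖∑ i, x i ^ 2‖ * ‖u‖ ^ 2 := by
  have h1 : ∑ i, (inner ℂ (x i u) u).re = Fintype.card ι * ‖u‖ ^ 2 := by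
    rw [← Complex.re_sum, ← sum_inner, ← sum_apply, hsum, smul_apply, one_apply_eq_self,
      ← Nat.cast_smul_eq_nsmul ℂ, inner_smul_left, Complex.conj_natCast,
      ← Complex.ofReal_natCast, Complex.re_ofReal_mul]
    exact congrArg _ (inner_self_eq_norm_sq (𝕜 := ℂ) u)
  have h2 : ∑ i, ‖x i u‖ ^ 2 ≤ ‖∑ i, x i ^ 2‖ * ‖u‖ ^ 2 := by
    rw [← re_inner_sum_sq_apply hsymm]
    refine (Complex.re_le_norm _).trans ((norm_inner_le_norm _ _).trans ?_)
    rw [pow_two, ← mul_assoc]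
    gcongr
    exact ContinuousLinearMap.le_opNorm _ _
  have h3 : ∀ i, ‖(x i - 1) u‖ ^ 2 = ‖x i u‖ ^ 2 - 2 * (inner ℂ (x i u) u).re + ‖u‖ ^ 2 :=
    fun i => norm_sub_sq (𝕜 := ℂ) (x i u) u
  simp only [h3, Finset.sum_add_distrib, Finset.sum_sub_distrib, ← Finset.mul_sum, h1,
    Finset.sum_const, Finset.card_univ, nsmul_eq_mul]
  have : 0 ≤ Fintype.card ι * ‖u‖ ^ 2 := by positivity
  linarith

end CentredPositive

/-- For positive bounded operators `x_1, …, x_n` on a complex Hilbert space with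
`∑ x_i = n • 1`, setting `a_i := x_i - 1` and `S := ‖∑ x_i²‖^(1/2)`, one has, in
the order of self-adjoint operators (`a ≤ b` iff `b - a` is positive),
`-((n-d)!/n!) d! S^(d-2) ∑ a_i² ≤ P_d(a_1,…,a_n) ≤ ((n-d)!/n!) d! S^(d-2) ∑ a_i²`. -/
theorem avgProd_le_sum_sq {H : Type*} [NormedAddCommGroup H]
    [InnerProductSpace ℂ H] [CompleteSpace H] (n d : ℕ) (hd : 2 ≤ d) (hdn : d ≤ n)
    (x : Fin n → H →L[ℂ] H) (hx : ∀ j, (x j).IsPositive)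
    (hsum : ∑ i, x i = n • (1 : H →L[ℂ] H))
    (a : Fin n → H →L[ℂ] H) (ha : ∀ i, a i = x i - 1)
    (S : ℝ) (hS : S = Real.sqrt ‖∑ i, (x i) ^ 2‖)
    (c : ℝ)
    (hc : c = (Nat.factorial (n - d) : ℝ) / (Nat.factorial n : ℝ) *
        (Nat.factorial d : ℝ) * S ^ (d - 2)) :
    (avgProd n d a - (-c) • ∑ i, (a i) ^ 2).IsPositive ∧
      (c • (∑ i, (a i) ^ 2) - avgProd n d a).IsPositive := by
  obtain rfl : a = fun i => x i - 1 := funext ha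
  have hxsymm : ∀ i u v, inner ℂ (x i u) v = inner ℂ u (x i v) :=
    fun i u v => (hx i).inner_left_eq_inner_right u v
  have hsymm : ∀ i u v, inner ℂ ((x i - 1) u) v = inner ℂ u ((x i - 1) v) := by
    intro i u v
    rw [sub_apply, sub_apply, inner_sub_left, inner_sub_right, hxsymm, one_apply_eq_self,
      one_apply_eq_self]
  have hasum : ∑ i, (x i - 1) = 0 := by
    simp [Finset.sum_sub_distrib, hsum]
  have hS0 : 0 ≤ S := hS ▸ Real.sqrt_nonneg _
  have hcol : ∀ u, ∑ i, ‖(x i - 1) u‖ ^ 2 ≤ S ^ 2 * ‖u‖ ^ 2 := by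
    intro u
    rw [hS, Real.sq_sqrt (norm_nonneg _)]
    exact sum_norm_sub_one_apply_sq_le hxsymm (by simpa using hsum) u
  have : Nonempty (Fin n) := ⟨⟨0, by omega⟩⟩
  set Q : H →L[ℂ] H := ∑ i : Fin d → Fin n with Function.Injective i,
    ((List.finRange d).map fun t => x (i t) - 1).prod with hQ
  set A : H →L[ℂ] H := ∑ i, (x i - 1) ^ 2 with hA
  set f : ℝ := (Nat.factorial (n - d) : ℝ) / (Nat.factorial n : ℝ) with hf
  have hf0 : 0 ≤ f := by positivity
  have hP : avgProd n d (fun i => x i - 1) = f • Q := rfl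
  have hAsymm : ∀ u v, inner ℂ (A u) v = inner ℂ u (A v) := by
    intro u v
    simp only [hA, sum_apply, sum_inner, inner_sum, pow_two, mul_apply_eq_comp, hsymm]
  have hQsymm : ∀ u v, inner ℂ (Q u) v = inner ℂ u (Q v) :=
    inner_sum_injective_left hsymm d
  have hbound : ∀ u, |f * (inner ℂ (Q u) u).re| ≤ c * (inner ℂ (A u) u).re := by
    intro u
    rw [abs_mul, abs_of_nonneg hf0, hc, hA, re_inner_sum_sq_apply hsymm, mul_assoc, mul_assoc,
      ← mul_assoc (d.factorial : ℝ)]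
    refine mul_le_mul_of_nonneg_left ?_ hf0
    rw [hQsymm]
    exact (Complex.abs_re_le_norm _).trans
      (norm_inner_sum_injective_le hS0 hasum hsymm hcol u hd)
  have hcomb : ∀ s t : ℝ, (∀ u, 0 ≤ s * (inner ℂ (Q u) u).re + t * (inner ℂ (A u) u).re) →
      (s • Q + t • A).IsPositive := by
    intro s t h
    refine ContinuousLinearMap.isPositive_def.2 ⟨fun u v => ?_, fun u => ?_⟩
    · simp only [ContinuousLinearMap.coe_coe, add_apply, smul_apply, inner_add_left,
        inner_add_right, ← Complex.coe_smul, inner_smul_left, inner_smul_right,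
        Complex.conj_ofReal, hQsymm, hAsymm]
    · rw [ContinuousLinearMap.reApplyInnerSelf_apply]
      simpa only [add_apply, smul_apply, inner_add_left, ← Complex.coe_smul, inner_smul_left,
        Complex.conj_ofReal, map_add, RCLike.re_eq_complex_re, Complex.re_ofReal_mul] using h u
  rw [hP]
  constructor
  · convert hcomb f c fun u => by linarith [(abs_le.1 (hbound u)).1] using 1
    module
  · convert hcomb (-f) c fun u => by linarith [(abs_le.1 (hbound u)).2] using 1
    module
end
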